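/- arXiv:1911.09133 — 10 statements merged into one kernel-verified Lean document; each statement's English description precedes it below -/
import Mathlib

section
/- Every block-reduced asymmetric choice (BRAC) Petri net has weighted comparable presets (WPI), i.e., for all transitions t,t' with •t∩•t'≠∅, either W(·,t)≤W(·,t') or W(·,t')≤W(·,t) componentwise on P. -/
section Defs

variable {S L P T : Type*}

/-- `enab tr s a` means the label `a` is enabled at state `s`, i.e. `s[a⟩`. -/
def enab (tr : S → L → S → Prop) (s : S) (a : L) : Prop := ∃ s', tr s a s'

/-- The LTS is deterministic. -/
def Deterministic (tr : S → L → S → Prop) : Prop :=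
  ∀ s a s' s'', tr s a s' → tr s a s'' → s' = s''

/-- `Walk tr s σ s'` : a walk from `s` to `s'` labelled by the word `σ`. -/
inductive Walk (tr : S → L → S → Prop) : S → List L → S → Prop
  | nil (s : S) : Walk tr s [] s
  | cons {s s' s'' : S} {a : L} {σ : List L} :
      tr s a s' → Walk tr s' σ s'' → Walk tr s (a :: σ) s''

/-- `s` is reachable from `s₀`. -/
def ReachableState (tr : S → L → S → Prop) (s₀ s : S) : Prop := ∃ σ, Walk tr s₀ σ s

/-- Every state is reachable from the initial state `s₀`. -/
def ReachableLTS (tr : S → L → S → Prop) (s₀ : S) : Prop := ∀ s, ReachableState tr s₀ s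

/-- `a ≡ b` : `a` and `b` are enabled at exactly the same states. -/
def lequiv (tr : S → L → S → Prop) (a b : L) : Prop := ∀ s, enab tr s a ↔ enab tr s b

/-- `a ▷ b` : wherever `a` is enabled so is `b`, and somewhere `b` is enabled but not `a`. -/
def limpl (tr : S → L → S → Prop) (a b : L) : Prop :=
  (∀ s, enab tr s a → enab tr s b) ∧ ∃ s, enab tr s b ∧ ¬ enab tr s a

/-- `a ⋈ b` : `a ▷ b` or `b ▷ a`. -/
def lbowtie (tr : S → L → S → Prop) (a b : L) : Prop := limpl tr a b ∨ limpl tr b a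

/-- `a ∥ b` : somewhere `a` but not `b` is enabled, and somewhere `b` but not `a`. -/
def linter (tr : S → L → S → Prop) (a b : L) : Prop :=
  (∃ s, enab tr s a ∧ ¬ enab tr s b) ∧ (∃ s, enab tr s b ∧ ¬ enab tr s a)

/-- Deactivation relation `a ⊲⊳ b`: one of the labels can deactivate the other. -/
def ldeact (tr : S → L → S → Prop) (a b : L) : Prop :=
  ∃ s s', (enab tr s a ∧ tr s b s' ∧ ¬ enab tr s' a) ∨
          (enab tr s b ∧ tr s a s' ∧ ¬ enab tr s' b)

/-- A Petri net over places `P` and transitions `T`: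
`Wpt p t = W(p,t)`, `Wtp t p = W(t,p)`, `M0` the initial marking. -/
structure PetriNet (P T : Type*) where
  Wpt : P → T → ℕ
  Wtp : T → P → ℕ
  M0 : P → ℕ

/-- A marking `M` enables a transition `t`. -/
def PetriNet.enables (N : PetriNet P T) (M : P → ℕ) (t : T) : Prop :=
  ∀ p, N.Wpt p t ≤ M p

/-- The marking resulting from firing `t` at `M`. -/
def PetriNet.fire (N : PetriNet P T) (M : P → ℕ) (t : T) : P → ℕ :=
  fun p => M p - N.Wpt p t + N.Wtp t p

/-- One firing step between markings. -/
def PetriNet.step (N : PetriNet P T) (M M' : P → ℕ) : Prop :=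
  ∃ t, N.enables M t ∧ M' = N.fire M t

/-- The marking `M` is reachable from the initial marking. -/
def PetriNet.reach (N : PetriNet P T) (M : P → ℕ) : Prop :=
  Relation.ReflTransGen N.step N.M0 M

/-- `N` solves the LTS given by `tr` and initial state `s₀`: there is a bijection `ζ`
from the states onto the reachable markings with `ζ s₀ = M₀` preserving edges both ways. -/
def Solves (N : PetriNet P T) (tr : S → T → S → Prop) (s₀ : S) : Prop :=
  ∃ ζ : S → (P → ℕ),
    Function.Injective ζ ∧
    (∀ M, N.reach M ↔ ∃ s, ζ s = M) ∧
    ζ s₀ = N.M0 ∧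
    ∀ s s' t, tr s t s' ↔ (N.enables (ζ s) t ∧ N.fire (ζ s) t = ζ s')

/-- The preset `•t` of a transition. -/
def PetriNet.preset (N : PetriNet P T) (t : T) : Set P := {p | 0 < N.Wpt p t}

/-- The postset `p^•` of a place. -/
def PetriNet.postset (N : PetriNet P T) (p : P) : Set T := {t | 0 < N.Wpt p t}

/-- `•T'` for a set of transitions `T'`. -/
def PetriNet.presetSet (N : PetriNet P T) (T' : Set T) : Set P :=
  {p | ∃ t ∈ T', 0 < N.Wpt p t}

/-- All arc weights are at most 1. -/
def PetriNet.plain (N : PetriNet P T) : Prop :=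
  ∀ p t, N.Wpt p t ≤ 1 ∧ N.Wtp t p ≤ 1

/-- Weighted comparable presets: transitions with intersecting presets have comparable presets. -/
def PetriNet.WPI (N : PetriNet P T) : Prop :=
  ∀ t t', (N.preset t ∩ N.preset t').Nonempty →
    (∀ p, N.Wpt p t ≤ N.Wpt p t') ∨ (∀ p, N.Wpt p t' ≤ N.Wpt p t)

/-- Weighted asymmetric choice. -/
def PetriNet.WAC (N : PetriNet P T) : Prop :=
  ∀ p p', (N.postset p ∩ N.postset p').Nonempty →
    (∀ t, N.Wpt p t ≤ N.Wpt p' t) ∨ (∀ t, N.Wpt p' t ≤ N.Wpt p t)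

/-- Equal conflict. -/
def PetriNet.EC (N : PetriNet P T) : Prop :=
  ∀ t t', (N.preset t ∩ N.preset t').Nonempty → ∀ p, N.Wpt p t = N.Wpt p t'

/-- Asymmetric choice: weighted asymmetric choice and plain. -/
def PetriNet.AC (N : PetriNet P T) : Prop := N.plain ∧ N.WAC

/-- Block-reduced asymmetric choice. -/
def PetriNet.BRAC (N : PetriNet P T) : Prop :=
  N.plain ∧ ∀ p p', (N.postset p ∩ N.postset p').Nonempty →
    N.postset p = N.postset p' ∨
    ∃ T1 T2 : Set T,
      (N.postset p = T1 ∧ N.postset p' = T1 ∪ T2 ∧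
        N.presetSet T1 = {p, p'} ∧ N.presetSet T2 = {p'}) ∨
      (N.postset p' = T1 ∧ N.postset p = T1 ∪ T2 ∧
        N.presetSet T1 = {p, p'} ∧ N.presetSet T2 = {p})

/-- Reduced asymmetric choice. -/
def PetriNet.RAC (N : PetriNet P T) : Prop :=
  N.plain ∧ ∀ p p', p ≠ p' → (N.postset p ∩ N.postset p').Nonempty →
    ((N.postset p).ncard = 1 ∧ (N.postset p').ncard ≤ 2 ∧
      N.presetSet (N.postset p') = {p, p'}) ∨
    ((N.postset p').ncard = 1 ∧ (N.postset p).ncard ≤ 2 ∧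
      N.presetSet (N.postset p) = {p, p'})

/-- A region `(R,B,F)` of the LTS given by `tr`. -/
def IsRegion (tr : S → L → S → Prop) (R : S → ℕ) (B F : L → ℕ) : Prop :=
  ∀ s a s', tr s a s' → B a ≤ R s ∧ R s' = R s - B a + F a

end Defs

/-- Every block-reduced asymmetric choice (BRAC) Petri net has
weighted comparable presets (WPI). -/
theorem brac_is_wpi {P T : Type*} [Fintype P] [Fintype T]
    (N : PetriNet P T) (h : N.BRAC) :
    ∀ t t', (N.preset t ∩ N.preset t').Nonempty →
      (∀ p, N.Wpt p t ≤ N.Wpt p t') ∨ (∀ p, N.Wpt p t' ≤ N.Wpt p t) := by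
  obtain ⟨hpl, hb⟩ := h
  rintro t t' ⟨p, hpt, hpt'⟩
  by_contra hcon
  push Not at hcon
  obtain ⟨⟨q, hq⟩, ⟨q', hq'⟩⟩ := hcon
  have h1 := (hpl q t).1
  have h2 := (hpl q' t').1
  have hpt0 : 0 < N.Wpt p t := hpt
  have hpt0' : 0 < N.Wpt p t' := hpt'
  have hqt : 0 < N.Wpt q t := by omega
  have hqt' : ¬ 0 < N.Wpt q t' := by omega
  have hq't' : 0 < N.Wpt q' t' := by omega
  have hq't : ¬ 0 < N.Wpt q' t := by omega
  have hmem : t' ∈ N.postset p := hpt0'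
  have hnot : t' ∉ N.postset q := hqt'
  rcases hb p q ⟨t, hpt0, hqt⟩ with heq | ⟨T1, T2, ⟨e1, e2, -, -⟩ | ⟨e1, e2, -, e4⟩⟩
  · exact hnot (heq ▸ hmem)
  · exact hnot (e2 ▸ Or.inl (e1 ▸ hmem))
  · rw [e2] at hmem
    rcases hmem with hm | hm
    · exact hnot (e1 ▸ hm)
    · have hx : q' ∈ N.presetSet T2 := ⟨t', hm, hq't'⟩
      rw [e4] at hx
      have hx' : q' = p := hx
      exact hq't (hx' ▸ hpt0)
end

section
/- Every equal-conflict (EC) Petri net is weighted asymmetric choice (WAC), i.e., for all places p,p' with p^•∩p'^•≠∅, either W(p,·)≤W(p',·) or W(p',·)≤W(p,·) componentwise on T. -/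
/-- Every equal-conflict (EC) Petri net is weighted asymmetric
choice (WAC). -/
theorem ec_is_wac {P T : Type*} [Fintype P] [Fintype T]
    (N : PetriNet P T) (h : N.EC) :
    ∀ p p', (N.postset p ∩ N.postset p').Nonempty →
      (∀ t, N.Wpt p t ≤ N.Wpt p' t) ∨ (∀ t, N.Wpt p' t ≤ N.Wpt p t) := by
  rintro p p' ⟨t0, h1, h2⟩
  have h1' : 0 < N.Wpt p t0 := h1
  have h2' : 0 < N.Wpt p' t0 := h2
  have key : ∀ t, (N.Wpt p t = N.Wpt p t0 ∧ N.Wpt p' t = N.Wpt p' t0) ∨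
      (N.Wpt p t = 0 ∧ N.Wpt p' t = 0) := by
    intro t
    by_cases hp : 0 < N.Wpt p t
    · exact Or.inl ⟨h t t0 ⟨p, hp, h1⟩ p, h t t0 ⟨p, hp, h1⟩ p'⟩
    · by_cases hq : 0 < N.Wpt p' t
      · exact Or.inl ⟨h t t0 ⟨p', hq, h2⟩ p, h t t0 ⟨p', hq, h2⟩ p'⟩
      · exact Or.inr ⟨by omega, by omega⟩
  rcases le_total (N.Wpt p t0) (N.Wpt p' t0) with hle | hle
  · left
    intro t
    rcases key t with ⟨a, b⟩ | ⟨a, b⟩ <;> omega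
  · right
    intro t
    rcases key t with ⟨a, b⟩ | ⟨a, b⟩ <;> omega
end

section
/- Let N=(P,T,W,M₀) be a Petri net solving an LTS TS=(S,T,→,s₀), and let a,b∈T be labels with a⊲⊳b (one of them can deactivate the other). Then there exists a place p∈P with W(p,a)>0 and W(p,b)>0, i.e., the presets of a and b are not disjoint. -/
theorem deact_aux {S P T : Type*} (tr : S → T → S → Prop) (N : PetriNet P T)
    (ζ : S → (P → ℕ)) (hr : ∀ M, N.reach M ↔ ∃ s, ζ s = M)
    (hz : ∀ s s' t, tr s t s' ↔ (N.enables (ζ s) t ∧ N.fire (ζ s) t = ζ s'))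
    (a b : T) (s s' : S) (ha : enab tr s a) (hb : tr s b s') (hn : ¬ enab tr s' a) :
    ∃ p : P, 0 < N.Wpt p a ∧ 0 < N.Wpt p b := by
  by_contra hc
  apply hn
  obtain ⟨u, hu⟩ := ha
  have h1 := ((hz _ _ _).1 hu).1
  obtain ⟨_, h3⟩ := (hz _ _ _).1 hb
  have he : N.enables (ζ s') a := by
    intro p
    have h4 := h1 p
    have h5 : ¬ (0 < N.Wpt p a ∧ 0 < N.Wpt p b) := fun h => hc ⟨p, h⟩
    rw [← h3]
    simp only [PetriNet.fire]
    omega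
  have hreach : N.reach (N.fire (ζ s') a) :=
    Relation.ReflTransGen.tail ((hr (ζ s')).2 ⟨s', rfl⟩) ⟨a, he, rfl⟩
  obtain ⟨v, hv⟩ := (hr _).1 hreach
  exact ⟨v, (hz _ _ _).2 ⟨he, hv.symm⟩⟩

/-- If `N` solves the LTS and `a ⊲⊳ b` (one label can deactivate the
other), then the presets of `a` and `b` are not disjoint. -/
theorem deactivation_common_preset_place
    {S P T : Type*} [Fintype S] [Fintype P] [Fintype T]
    (tr : S → T → S → Prop) (s₀ : S) (N : PetriNet P T)
    (hsol : Solves N tr s₀) (a b : T) (hd : ldeact tr a b) :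
    ∃ p : P, 0 < N.Wpt p a ∧ 0 < N.Wpt p b := by
  obtain ⟨ζ, _, hr, _, hz⟩ := hsol
  obtain ⟨s, s', ⟨h1, h2, h3⟩ | ⟨h1, h2, h3⟩⟩ := hd
  · exact deact_aux tr N ζ hr hz a b s s' h1 h2 h3
  · obtain ⟨p, hp, hq⟩ := deact_aux tr N ζ hr hz b a s s' h1 h2 h3
    exact ⟨p, hq, hp⟩
end

section
/- Let TS=(S,Σ,→,s₀) be a finite, reachable, deterministic LTS and a,b∈Σ labels with a∥b and a⊲⊳b. Then no Petri net with weighted comparable presets (WPI) solves TS. -/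
/-- In a net solving the LTS, enabledness in the LTS and in the net coincide. -/
theorem enab_iff_of_sol {S P T : Type*} (N : PetriNet P T) (tr : S → T → S → Prop)
    (ζ : S → (P → ℕ)) (hr : ∀ M, N.reach M ↔ ∃ s, ζ s = M)
    (he : ∀ s s' t, tr s t s' ↔ (N.enables (ζ s) t ∧ N.fire (ζ s) t = ζ s'))
    (s : S) (t : T) : enab tr s t ↔ N.enables (ζ s) t := by
  constructor
  · rintro ⟨s', h⟩
    exact ((he s s' t).1 h).1
  · intro h
    have h0 : N.reach (ζ s) := (hr _).2 ⟨s, rfl⟩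
    have h1 : N.reach (N.fire (ζ s) t) := Relation.ReflTransGen.tail h0 ⟨t, h, rfl⟩
    obtain ⟨s', hs'⟩ := (hr _).1 h1
    exact ⟨s', (he s s' t).2 ⟨h, hs'.symm⟩⟩

/-- If firing `b` deactivates `a`, the presets of `a` and `b` intersect. -/
theorem preset_inter_of_deact {P T : Type*} (N : PetriNet P T) (M : P → ℕ) (a b : T)
    (ha : N.enables M a) (hn : ¬ N.enables (N.fire M b) a) :
    (N.preset a ∩ N.preset b).Nonempty := by
  unfold PetriNet.enables at hn
  push Not at hn
  obtain ⟨p, hp⟩ := hn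
  have h := ha p
  simp only [PetriNet.fire] at hp
  refine ⟨p, ?_, ?_⟩ <;> simp only [PetriNet.preset, Set.mem_setOf_eq] <;> omega

/-- Case 1: If the LTS is finite, reachable and deterministic and
`a ∥ b` together with `a ⊲⊳ b` hold, then no WPI Petri net solves the LTS. -/
theorem case1_no_wpi_solution
    {S L : Type*} [Fintype S] [Fintype L] (tr : S → L → S → Prop) (s₀ : S)
    (hdet : Deterministic tr) (hreach : ReachableLTS tr s₀)
    (a b : L) (h1 : linter tr a b) (h2 : ldeact tr a b) :
    ∀ (P : Type) [Finite P] (N : PetriNet P L), N.WPI → ¬ Solves N tr s₀ := by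
  intro P _ N hW ⟨ζ, _, hr, _, he⟩
  have hen := enab_iff_of_sol N tr ζ hr he
  obtain ⟨⟨s, hsa, hsb⟩, ⟨u, hub, hua⟩⟩ := h1
  rw [hen] at hsa hsb hub hua
  have hne : (N.preset a ∩ N.preset b).Nonempty := by
    obtain ⟨v, w, ⟨h, hf, hn⟩ | ⟨h, hf, hn⟩⟩ := h2
    · rw [hen] at h hn
      rw [← ((he _ _ _).1 hf).2] at hn
      exact preset_inter_of_deact N _ a b h hn
    · rw [hen] at h hn
      rw [← ((he _ _ _).1 hf).2] at hn
      rw [Set.inter_comm]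
      exact preset_inter_of_deact N _ b a h hn
  rcases hW a b hne with h | h
  · exact hua fun p => (h p).trans (hub p)
  · exact hsb fun p => (h p).trans (hsa p)
end

section
/- Let N=(P,T,W,M₀) be a Petri net with weighted comparable presets (WPI) solving a finite, reachable, deterministic LTS TS=(S,T,→,s₀), and let a,b∈T be labels with a∥b. Then the presets of a and b are disjoint: •a∩•b=∅. -/
/-- Case 2: If a WPI Petri net `N` solves a finite, reachable,
deterministic LTS and `a ∥ b`, then the presets of `a` and `b` are disjoint. -/
theorem interleave_disjoint_presets
    {S P T : Type*} [Fintype S] [Fintype P] [Fintype T]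
    (tr : S → T → S → Prop) (s₀ : S)
    (hdet : Deterministic tr) (hreach : ReachableLTS tr s₀)
    (N : PetriNet P T) (hwpi : N.WPI) (hsol : Solves N tr s₀)
    (a b : T) (hab : linter tr a b) :
    N.preset a ∩ N.preset b = ∅ := by
  obtain ⟨ζ, _, hζ, _, htr⟩ := hsol
  -- enabledness transfers from markings back to states
  have key : ∀ s t, N.enables (ζ s) t → enab tr s t := by
    intro s t h
    have hr : N.reach (N.fire (ζ s) t) :=
      Relation.ReflTransGen.tail ((hζ (ζ s)).2 ⟨s, rfl⟩) ⟨t, h, rfl⟩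
    obtain ⟨s', hs'⟩ := (hζ _).1 hr
    exact ⟨s', (htr s s' t).2 ⟨h, hs'.symm⟩⟩
  obtain ⟨⟨s, ⟨x, hx⟩, hsb⟩, ⟨s', ⟨y, hy⟩, hsa⟩⟩ := hab
  by_contra hne
  rcases hwpi a b (Set.nonempty_iff_ne_empty.2 hne) with h | h
  · exact hsa (key s' a fun p => (h p).trans (((htr _ _ _).1 hy).1 p))
  · exact hsb (key s b fun p => (h p).trans (((htr _ _ _).1 hx).1 p))
end

section
/- Let TS=(S,Σ,→,s₀) be a finite, reachable, deterministic LTS that is solved by some Petri net with weighted comparable presets (WPI), and let a,b∈Σ be labels with a≡b. Then there exists a WPI Petri net N'=(P,T,W',M₀) solving TS in which a and b have identical presets including arc weights, i.e., W'(p,a)=W'(p,b) for all places p. -/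
/-- Replacing the preset of `a` by that of `b`. -/
theorem merge_aux {S P L : Type*} (tr : S → L → S → Prop) (s₀ : S)
    (N : PetriNet P L) (hwpi : N.WPI) (hsol : Solves N tr s₀) (a b : L)
    (hen : ∀ M, N.reach M → (N.enables M a ↔ N.enables M b))
    (hle : ∀ M, N.reach M → N.enables M a → ∀ p, N.Wpt p a ≤ N.Wpt p b + N.Wtp a p) :
    ∃ N' : PetriNet P L, N'.M0 = N.M0 ∧ N'.WPI ∧ Solves N' tr s₀ ∧
      ∀ p : P, N'.Wpt p a = N'.Wpt p b := by
  classical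
  let N' : PetriNet P L :=
    { Wpt := fun p t => N.Wpt p (if t = a then b else t)
      Wtp := fun t p => if t = a then N.Wpt p b + N.Wtp a p - N.Wpt p a else N.Wtp t p
      M0 := N.M0 }
  have hE : ∀ M, N.reach M → ∀ t, (N'.enables M t ↔ N.enables M t) := by
    intro M hM t
    by_cases h : t = a
    · subst h
      rw [hen M hM]
      simp [N', PetriNet.enables]
    · simp [N', PetriNet.enables, h]
  have hF : ∀ M, N.reach M → ∀ t, N.enables M t → N'.fire M t = N.fire M t := by
    intro M hM t ht
    funext p
    by_cases h : t = a
    · subst h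
      have h1 := hle M hM ht p
      have h2 := (hen M hM).1 ht p
      have h3 := ht p
      simp only [N', PetriNet.fire, if_true]
      omega
    · simp [N', PetriNet.fire, h]
  have hR : ∀ M, N'.reach M ↔ N.reach M := by
    intro M
    constructor
    · intro h
      induction h with
      | refl => exact Relation.ReflTransGen.refl
      | tail _ hs ih =>
        obtain ⟨t, ht, rfl⟩ := hs
        have ht' := (hE _ ih t).1 ht
        exact Relation.ReflTransGen.tail ih ⟨t, ht', hF _ ih t ht'⟩
    · intro h
      induction h with
      | refl => exact Relation.ReflTransGen.refl
      | tail h0 hs ih =>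
        obtain ⟨t, ht, rfl⟩ := hs
        exact Relation.ReflTransGen.tail ih ⟨t, (hE _ h0 t).2 ht, (hF _ h0 t ht).symm⟩
  refine ⟨N', rfl, ?_, ?_, ?_⟩
  · intro t t' h
    exact hwpi (if t = a then b else t) (if t' = a then b else t') h
  · obtain ⟨ζ, hinj, hz, h0, htr⟩ := hsol
    refine ⟨ζ, hinj, fun M => (hR M).trans (hz M), h0, fun s s' t => ?_⟩
    have hs : N.reach (ζ s) := (hz _).2 ⟨s, rfl⟩
    rw [htr, hE _ hs t]
    exact and_congr_right fun ht => by rw [hF _ hs t ht]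
  · intro p
    simp [N']

/-- Case 3/4: If a WPI Petri net `N = (P,T,W,M₀)` solves a finite,
reachable, deterministic LTS and `a ≡ b`, then there is a WPI Petri net
`N' = (P,T,W',M₀)` solving the LTS with `W'(p,a) = W'(p,b)` for all places `p`. -/
theorem equiv_labels_identical_presets
    {S P L : Type*} [Fintype S] [Fintype L] [Finite P]
    (tr : S → L → S → Prop) (s₀ : S)
    (hdet : Deterministic tr) (hreach : ReachableLTS tr s₀)
    (N : PetriNet P L) (hwpi : N.WPI) (hsol : Solves N tr s₀)
    (a b : L) (hab : lequiv tr a b) :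
    ∃ N' : PetriNet P L, N'.M0 = N.M0 ∧ N'.WPI ∧ Solves N' tr s₀ ∧
      ∀ p : P, N'.Wpt p a = N'.Wpt p b := by
  have hen : ∀ M, N.reach M → (N.enables M a ↔ N.enables M b) := by
    obtain ⟨ζ, _, hz, _, htr⟩ := hsol
    have key : ∀ s t, enab tr s t ↔ N.enables (ζ s) t := by
      intro s t
      constructor
      · rintro ⟨s', h⟩
        exact ((htr _ _ _).1 h).1
      · intro h
        obtain ⟨s', hs'⟩ := (hz (N.fire (ζ s) t)).1
          (Relation.ReflTransGen.tail ((hz _).2 ⟨s, rfl⟩) ⟨t, h, rfl⟩)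
        exact ⟨s', (htr _ _ _).2 ⟨h, hs'.symm⟩⟩
    intro M hM
    obtain ⟨s, rfl⟩ := (hz M).1 hM
    rw [← key, ← key]
    exact hab s
  by_cases hint : (N.preset a ∩ N.preset b).Nonempty
  · rcases hwpi a b hint with h | h
    · exact merge_aux tr s₀ N hwpi hsol a b hen
        fun _ _ _ p => (h p).trans (Nat.le_add_right _ _)
    · obtain ⟨N', h1, h2, h3, h4⟩ := merge_aux tr s₀ N hwpi hsol b a
        (fun M hM => (hen M hM).symm) fun _ _ _ p => (h p).trans (Nat.le_add_right _ _)
      exact ⟨N', h1, h2, h3, fun p => (h4 p).symm⟩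
  · refine merge_aux tr s₀ N hwpi hsol a b hen ?_
    intro M hM hMa p
    by_contra hp
    have main : ∀ n M, M p = n → N.reach M → N.enables M a → False := by
      intro n
      induction n using Nat.strong_induction_on with
      | _ n ih =>
        intro M hn hM hMa
        have hM' : N.reach (N.fire M a) := Relation.ReflTransGen.tail hM ⟨a, hMa, rfl⟩
        have hb : N.enables (N.fire M a) b := by
          intro q
          have h1 := (hen M hM).1 hMa q
          have h2 : N.Wpt q a = 0 ∨ N.Wpt q b = 0 := by
            by_contra hc
            exact hint ⟨q, by simp only [PetriNet.preset, Set.mem_setOf_eq]; omega,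
              by simp only [PetriNet.preset, Set.mem_setOf_eq]; omega⟩
          simp only [PetriNet.fire]
          omega
        refine ih (N.fire M a p) ?_ _ rfl hM' ((hen _ hM').2 hb)
        have h3 := hMa p
        simp only [PetriNet.fire]
        omega
    exact main _ M rfl hM hMa
end

section
/- Let TS=(S,Σ,→,s₀) be a finite, reachable, deterministic LTS that is solved by some Petri net, and let a,b∈Σ be labels with a≡b and not a⊲⊳b. Then every edge of TS labelled a is a self-loop and every edge labelled b is a self-loop, i.e., s[a⟩s' implies s'=s and s[b⟩s' implies s'=s. -/
/-- If firing `a` never disables `a`, finiteness forces all `a`-edges to be self-loops. -/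
theorem selfloop_of_persistent {S L P : Type*} [Finite S] (tr : S → L → S → Prop)
    (N : PetriNet P L) (ζ : S → (P → ℕ)) (hinj : Function.Injective ζ)
    (hedge : ∀ s s' t, tr s t s' ↔ (N.enables (ζ s) t ∧ N.fire (ζ s) t = ζ s'))
    (a : L) (hp : ∀ s s', tr s a s' → enab tr s' a) :
    ∀ s s' : S, tr s a s' → s' = s := by
  intro s s' h
  let g : ℕ → {x : S // enab tr x a} := fun n =>
    Nat.rec ⟨s, s', h⟩ (fun _ x => ⟨x.2.choose, hp _ _ x.2.choose_spec⟩) n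
  have hg : ∀ n, tr (g n).1 a (g (n+1)).1 := fun n => (g n).2.choose_spec
  have hsum : ∀ n p, ζ (g n).1 p + n * N.Wpt p a = ζ s p + n * N.Wtp a p := by
    intro n p
    induction n with
    | zero => simp [g]
    | succ n ih =>
      obtain ⟨h1, h2⟩ := (hedge _ _ _).1 (hg n)
      have h3 := h1 p
      have h4 := congrFun h2 p
      simp only [PetriNet.fire] at h4
      rw [← h4, Nat.succ_mul, Nat.succ_mul]
      omega
  obtain ⟨i, j, hij, he⟩ := Finite.exists_ne_map_eq_of_infinite g
  obtain ⟨h1, h2⟩ := (hedge _ _ _).1 h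
  apply hinj
  rw [← h2]
  funext p
  have h3 := h1 p
  have e1 := hsum i p
  have e2 := hsum j p
  rw [he] at e1
  have hFB : N.Wpt p a = N.Wtp a p := by
    zify at e1 e2 ⊢
    have hne : (i : ℤ) - j ≠ 0 := sub_ne_zero.2 (by exact_mod_cast hij)
    apply mul_left_cancel₀ hne
    linarith
  simp only [PetriNet.fire]
  omega

/-- Case 4: If some Petri net solves the finite, reachable,
deterministic LTS and `a ≡ b` with `¬ a ⊲⊳ b`, then every `a`-labelled edge and
every `b`-labelled edge is a self-loop. -/
theorem equiv_no_deact_selfloops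
    {S L : Type*} [Fintype S] [Fintype L] (tr : S → L → S → Prop) (s₀ : S)
    (hdet : Deterministic tr) (hreach : ReachableLTS tr s₀)
    (hsolvable : ∃ (P : Type) (_ : Finite P) (N : PetriNet P L), Solves N tr s₀)
    (a b : L) (hab : lequiv tr a b) (hnd : ¬ ldeact tr a b) :
    (∀ s s' : S, tr s a s' → s' = s) ∧ (∀ s s' : S, tr s b s' → s' = s) := by
  obtain ⟨P, _, N, ζ, hinj, -, -, hedge⟩ := hsolvable
  refine ⟨selfloop_of_persistent tr N ζ hinj hedge a fun s s' h => ?_,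
    selfloop_of_persistent tr N ζ hinj hedge b fun s s' h => ?_⟩
  · by_contra hc
    exact hnd ⟨s, s', Or.inr ⟨(hab s).1 ⟨s', h⟩, h, fun hb => hc ((hab s').2 hb)⟩⟩
  · by_contra hc
    exact hnd ⟨s, s', Or.inl ⟨(hab s).2 ⟨s', h⟩, h, fun hb => hc ((hab s').1 hb)⟩⟩
end

section
/- Let N=(P,T,W,M₀) be a Petri net with weighted comparable presets (WPI) solving a finite, reachable, deterministic LTS TS=(S,T,→,s₀), and let a,b∈T be labels with a▷b and a⊲⊳b. Then W(·,b)⪇W(·,a), i.e., W(p,b)≤W(p,a) for all places p and W(·,b)≠W(·,a); in particular the preset of b is properly contained in that of a. -/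
/-- Case 5: If a WPI Petri net `N` solves a finite, reachable,
deterministic LTS and `a ▷ b` and `a ⊲⊳ b`, then `W(·,b) ⪇ W(·,a)`, i.e. the
preset of `b` is properly contained (with arc weights) in that of `a`. -/
theorem bowtie_deact_proper_containment
    {S P T : Type*} [Fintype S] [Fintype P] [Fintype T]
    (tr : S → T → S → Prop) (s₀ : S)
    (hdet : Deterministic tr) (hreach : ReachableLTS tr s₀)
    (N : PetriNet P T) (hwpi : N.WPI) (hsol : Solves N tr s₀)
    (a b : T) (himp : limpl tr a b) (hd : ldeact tr a b) :
    (∀ p, N.Wpt p b ≤ N.Wpt p a) ∧ (∃ p, N.Wpt p b ≠ N.Wpt p a) := by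
  obtain ⟨ζ, -, hr, -, htr⟩ := hsol
  have hen : ∀ s t, enab tr s t ↔ N.enables (ζ s) t := by
    intro s t
    constructor
    · rintro ⟨s', h⟩
      exact ((htr s s' t).1 h).1
    · intro h
      have h1 : N.reach (ζ s) := (hr _).2 ⟨s, rfl⟩
      have h2 : N.reach (N.fire (ζ s) t) := Relation.ReflTransGen.tail h1 ⟨t, h, rfl⟩
      obtain ⟨s', hs'⟩ := (hr _).1 h2
      exact ⟨s', (htr s s' t).2 ⟨h, hs'.symm⟩⟩
  have key : ∀ x y s s', enab tr s x → tr s y s' → ¬ enab tr s' x →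
      ∃ p, 0 < N.Wpt p x ∧ 0 < N.Wpt p y := by
    intro x y s s' hx hy hn
    rw [hen] at hx hn
    obtain ⟨hy1, hy2⟩ := (htr s s' y).1 hy
    rw [← hy2] at hn
    unfold PetriNet.enables PetriNet.fire at hn
    push Not at hn
    obtain ⟨p, hp⟩ := hn
    have h1 := hx p
    have h2 := hy1 p
    exact ⟨p, by omega, by omega⟩
  have hne : (N.preset a ∩ N.preset b).Nonempty := by
    obtain ⟨s, s', ⟨h1, h2, h3⟩ | ⟨h1, h2, h3⟩⟩ := hd
    · obtain ⟨p, hp, hq⟩ := key _ _ _ _ h1 h2 h3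
      exact ⟨p, hp, hq⟩
    · obtain ⟨p, hp, hq⟩ := key _ _ _ _ h1 h2 h3
      exact ⟨p, hq, hp⟩
  have hnot : ¬ ∀ p, N.Wpt p a ≤ N.Wpt p b := by
    intro h
    obtain ⟨s, hb, ha⟩ := himp.2
    rw [hen] at hb ha
    exact ha fun p => (h p).trans (hb p)
  refine ⟨(hwpi a b hne).resolve_left hnot, ?_⟩
  by_contra hc
  push Not at hc
  exact hnot fun p => (hc p).ge
end

section
/- Let TS=(S,Σ,→,s₀) be a finite, reachable, deterministic LTS without self-loops (no edge s[t⟩s), and suppose some Petri net with weighted comparable presets (WPI) solves TS. Then there exists a WPI Petri net N=(P,T,W,M₀) solving TS such that for all labels a,b∈Σ: (i) if a≡b then W(·,a)=W(·,b); (ii) if a∥b, or if a⋈b and not a⊲⊳b, then •a∩•b=∅; (iii) if a▷b and a⊲⊳b then W(·,b)⪇W(·,a), i.e., the preset of b is properly contained (with arc weights) in that of a. -/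
section Helpers

variable {S L P : Type*}

/-- The data of a solution. -/
def IsSol (N : PetriNet P L) (tr : S → L → S → Prop) (s₀ : S) (ζ : S → (P → ℕ)) : Prop :=
  Function.Injective ζ ∧ (∀ M, N.reach M ↔ ∃ s, ζ s = M) ∧ ζ s₀ = N.M0 ∧
    ∀ s s' t, tr s t s' ↔ (N.enables (ζ s) t ∧ N.fire (ζ s) t = ζ s')

lemma IsSol.enab_iff {N : PetriNet P L} {tr : S → L → S → Prop} {s₀ : S} {ζ : S → (P → ℕ)}
    (h : IsSol N tr s₀ ζ) (s : S) (a : L) : enab tr s a ↔ N.enables (ζ s) a := by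
  obtain ⟨_, h2, _, h4⟩ := h
  constructor
  · rintro ⟨s', hs'⟩
    exact ((h4 _ _ _).1 hs').1
  · intro he
    have hr : N.reach (N.fire (ζ s) a) :=
      Relation.ReflTransGen.tail ((h2 _).2 ⟨s, rfl⟩) ⟨a, he, rfl⟩
    obtain ⟨s', hs'⟩ := (h2 _).1 hr
    exact ⟨s', (h4 _ _ _).2 ⟨he, hs'.symm⟩⟩

lemma IsSol.inter_aux {N : PetriNet P L} {tr : S → L → S → Prop} {s₀ : S} {ζ : S → (P → ℕ)}
    (h : IsSol N tr s₀ ζ) {a b : L} {s s' : S} (h1 : enab tr s a) (h2 : tr s b s')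
    (h3 : ¬ enab tr s' a) : ∃ p, 0 < N.Wpt p a ∧ 0 < N.Wpt p b := by
  rw [h.enab_iff] at h1 h3
  obtain ⟨_, hf⟩ := (h.2.2.2 _ _ _).1 h2
  simp only [PetriNet.enables, not_forall, not_le] at h3
  obtain ⟨p, hp⟩ := h3
  have := h1 p
  rw [← hf] at hp
  simp only [PetriNet.fire] at hp
  exact ⟨p, by omega, by omega⟩

lemma IsSol.inter {N : PetriNet P L} {tr : S → L → S → Prop} {s₀ : S} {ζ : S → (P → ℕ)}
    (h : IsSol N tr s₀ ζ) {a b : L} (hd : ldeact tr a b) :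
    (N.preset a ∩ N.preset b).Nonempty := by
  obtain ⟨s, s', ⟨h1, h2, h3⟩ | ⟨h1, h2, h3⟩⟩ := hd
  · obtain ⟨p, hp, hq⟩ := h.inter_aux h1 h2 h3
    exact ⟨p, hp, hq⟩
  · obtain ⟨p, hp, hq⟩ := h.inter_aux h1 h2 h3
    exact ⟨p, hq, hp⟩

lemma IsSol.mono {N : PetriNet P L} {tr : S → L → S → Prop} {s₀ : S} {ζ : S → (P → ℕ)}
    (h : IsSol N tr s₀ ζ) {a b : L} (hab : ∀ p, N.Wpt p a ≤ N.Wpt p b) (s : S)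
    (hs : enab tr s b) : enab tr s a := by
  rw [h.enab_iff] at hs ⊢
  exact fun p => (hab p).trans (hs p)

/-- No label can be fired forever. -/
lemma IsSol.no_forever [Finite S] {N : PetriNet P L} {tr : S → L → S → Prop} {s₀ : S}
    {ζ : S → (P → ℕ)} (h : IsSol N tr s₀ ζ) (hnoself : ∀ (s : S) (t : L), ¬ tr s t s)
    (b : L) (X : S → Prop) (hX : ∀ s, X s → ∃ s', tr s b s' ∧ X s') (s : S) (hs : X s) :
    False := by
  choose! f hf hf' using hX
  have hXn : ∀ n, X (f^[n] s) := by
    intro n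
    induction n with
    | zero => exact hs
    | succ n ih => rw [Function.iterate_succ_apply']; exact hf' _ ih
  have hstep : ∀ u v, tr u b v → ∀ p, (ζ v p : ℤ) = ζ u p + (N.Wtp b p - N.Wpt p b) := by
    intro u v huv p
    obtain ⟨he, hfi⟩ := (h.2.2.2 _ _ _).1 huv
    have := he p
    rw [← hfi]
    simp only [PetriNet.fire]
    omega
  have hn : ∀ n p, (ζ (f^[n] s) p : ℤ) = ζ s p + n * (N.Wtp b p - N.Wpt p b) := by
    intro n p
    induction n with
    | zero => simp
    | succ n ih =>
      rw [Function.iterate_succ_apply', hstep _ _ (hf _ (hXn n)), ih]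
      push_cast
      ring
  obtain ⟨i, j, hij, he⟩ := Finite.exists_ne_map_eq_of_infinite (fun n : ℕ => f^[n] s)
  have he' : f^[i] s = f^[j] s := he
  have hd : ∀ p, (N.Wtp b p - N.Wpt p b : ℤ) = 0 := by
    intro p
    have h1 := hn i p
    have h2 := hn j p
    rw [he'] at h1
    have h3 : ((i : ℤ) - j) * (N.Wtp b p - N.Wpt p b : ℤ) = 0 := by linarith
    rcases mul_eq_zero.1 h3 with h4 | h4
    · exact absurd (by omega) hij
    · exact h4
  have heq : f s = s := by
    apply h.1
    funext p
    have := hstep _ _ (hf s hs) p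
    rw [hd p] at this
    omega
  have := hf s hs
  rw [heq] at this
  exact hnoself _ _ this

lemma IsSol.self_deact [Finite S] {N : PetriNet P L} {tr : S → L → S → Prop} {s₀ : S}
    {ζ : S → (P → ℕ)} (h : IsSol N tr s₀ ζ) (hnoself : ∀ (s : S) (t : L), ¬ tr s t s)
    (b : L) (hl : ∃ s, enab tr s b) : ∃ s s', tr s b s' ∧ ¬ enab tr s' b := by
  by_contra! hc
  obtain ⟨s, hs⟩ := hl
  exact h.no_forever hnoself b (fun s => enab tr s b)
    (fun s ⟨s', hs'⟩ => ⟨s', hs', hc _ _ hs'⟩) s hs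

lemma IsSol.impl_deact [Finite S] {N : PetriNet P L} {tr : S → L → S → Prop} {s₀ : S}
    {ζ : S → (P → ℕ)} (h : IsSol N tr s₀ ζ) (hnoself : ∀ (s : S) (t : L), ¬ tr s t s)
    (a b : L) (hl : ∃ s, enab tr s a) (hab : ∀ s, enab tr s a → enab tr s b) :
    ldeact tr a b := by
  by_contra hc
  obtain ⟨s, hs⟩ := hl
  refine h.no_forever hnoself b (fun s => enab tr s a) (fun s hsa => ?_) s hs
  obtain ⟨s', hs'⟩ := hab s hsa
  refine ⟨s', hs', ?_⟩
  by_contra hna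
  exact hc ⟨s, s', Or.inl ⟨hsa, hs', hna⟩⟩

/-- In each equivalence class of live labels there is one with the largest preset. -/
lemma IsSol.exists_max [Finite S] [Finite L] {N : PetriNet P L} {tr : S → L → S → Prop} {s₀ : S}
    {ζ : S → (P → ℕ)} (h : IsSol N tr s₀ ζ) (hnoself : ∀ (s : S) (t : L), ¬ tr s t s)
    (hW : N.WPI) (t : L) (hl : ∃ s, enab tr s t) :
    ∃ m, lequiv tr t m ∧ ∀ u, lequiv tr t u → ∀ p, N.Wpt p u ≤ N.Wpt p m := by
  obtain ⟨m, hm⟩ := (Set.toFinite {u | lequiv tr t u}).exists_maximalFor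
    (fun u => fun p => N.Wpt p u) _ ⟨t, fun s => Iff.rfl⟩
  have hm1 : lequiv tr t m := hm.1
  refine ⟨m, hm1, fun u hu => ?_⟩
  have hd : ldeact tr u m := h.impl_deact hnoself u m
    (by obtain ⟨s, hs⟩ := hl; exact ⟨s, (hu s).1 hs⟩)
    (fun s hs => (hm1 s).1 ((hu s).2 hs))
  rcases hW _ _ (h.inter hd) with h1 | h1
  · exact h1
  · exact hm.2 (show lequiv tr t u from hu) h1

open Classical in
/-- The modified net. -/
noncomputable def newNet (N : PetriNet P L) (tr : S → L → S → Prop) (m : L → L) :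
    PetriNet (Option P) L where
  Wpt q t := match q with
    | none => if ∃ s, enab tr s t then 0 else 1
    | some p => if ∃ s, enab tr s t then N.Wpt p (m t) else 0
  Wtp t q := match q with
    | none => 0
    | some p => if ∃ s, enab tr s t then N.Wtp t p + (N.Wpt p (m t) - N.Wpt p t) else 0
  M0 q := match q with
    | none => 0
    | some p => N.M0 p

/-- The markings of the modified net. -/
def newMark (ζ : S → (P → ℕ)) (s : S) : Option P → ℕ
  | none => 0
  | some p => ζ s p

lemma newNet_step {N : PetriNet P L} {tr : S → L → S → Prop} {s₀ : S}
    {ζ : S → (P → ℕ)} (h : IsSol N tr s₀ ζ) (m : L → L)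
    (hm : ∀ t, (∃ s, enab tr s t) → lequiv tr t (m t) ∧
      ∀ u, lequiv tr t u → ∀ p, N.Wpt p u ≤ N.Wpt p (m t)) (s s' : S) (t : L) :
    tr s t s' ↔ ((newNet N tr m).enables (newMark ζ s) t ∧
      (newNet N tr m).fire (newMark ζ s) t = newMark ζ s') := by
  by_cases hl : ∃ s, enab tr s t
  · obtain ⟨hm1, hm2⟩ := hm t hl
    have hm3 := hm2 t (fun _ => Iff.rfl)
    have hen : (newNet N tr m).enables (newMark ζ s) t ↔ enab tr s t := by
      rw [hm1 s, h.enab_iff]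
      simp [PetriNet.enables, newNet, newMark, Option.forall, hl]
    have hfi : enab tr s t → ((newNet N tr m).fire (newMark ζ s) t = newMark ζ s' ↔
        N.fire (ζ s) t = ζ s') := by
      intro he
      have he2 := (hm1 s).1 he
      rw [h.enab_iff] at he2
      simp only [funext_iff, Option.forall, PetriNet.fire, newNet, newMark, hl, if_true]
      simp only [Nat.sub_zero, Nat.add_zero, true_and]
      refine forall_congr' fun p => ?_
      have h1 := he2 p
      have h2 := hm3 p
      omega
    rw [hen, h.2.2.2]
    constructor
    · rintro ⟨h1, h2⟩
      have := (h.enab_iff s t).2 h1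
      exact ⟨this, (hfi this).2 h2⟩
    · rintro ⟨h1, h2⟩
      exact ⟨(h.enab_iff s t).1 h1, (hfi h1).1 h2⟩
  · constructor
    · intro ht
      exact absurd ⟨s, s', ht⟩ hl
    · rintro ⟨h1, _⟩
      have := h1 none
      simp [newNet, newMark, hl] at this

lemma newNet_sol {N : PetriNet P L} {tr : S → L → S → Prop} {s₀ : S}
    {ζ : S → (P → ℕ)} (h : IsSol N tr s₀ ζ) (hreach : ReachableLTS tr s₀) (m : L → L)
    (hm : ∀ t, (∃ s, enab tr s t) → lequiv tr t (m t) ∧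
      ∀ u, lequiv tr t u → ∀ p, N.Wpt p u ≤ N.Wpt p (m t)) :
    IsSol (newNet N tr m) tr s₀ (newMark ζ) := by
  have h0 : newMark ζ s₀ = (newNet N tr m).M0 := by
    funext q
    cases q with
    | none => rfl
    | some p => simp [newMark, newNet, h.2.2.1]
  have hstep := newNet_step h m hm
  refine ⟨?_, ?_, h0, hstep⟩
  · intro s s' hss
    apply h.1
    funext p
    exact congrFun hss (some p)
  · intro M
    constructor
    · intro hM
      unfold PetriNet.reach at hM
      induction hM with
      | refl => exact ⟨s₀, h0⟩
      | tail _ hst ih =>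
        obtain ⟨s, rfl⟩ := ih
        obtain ⟨t, he, rfl⟩ := hst
        have hl : ∃ s, enab tr s t := by
          by_contra hl
          have := he none
          simp [newNet, newMark, hl] at this
        have hen : enab tr s t := by
          rw [(hm t hl).1 s, h.enab_iff]
          intro p
          have := he (some p)
          simpa [newNet, newMark, hl] using this
        obtain ⟨s', hs'⟩ := hen
        exact ⟨s', ((hstep _ _ _).1 hs').2.symm⟩
    · rintro ⟨s, rfl⟩
      obtain ⟨σ, hσ⟩ := hreach s
      have key : ∀ u σ v, Walk tr u σ v → (newNet N tr m).reach (newMark ζ u) →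
          (newNet N tr m).reach (newMark ζ v) := by
        intro u σ v hw
        induction hw with
        | nil => exact id
        | cons ht _ ih =>
          intro hr
          obtain ⟨h1, h2⟩ := (hstep _ _ _).1 ht
          exact ih (Relation.ReflTransGen.tail hr ⟨_, h1, h2.symm⟩)
      refine key _ _ _ hσ ?_
      rw [h0]
      exact Relation.ReflTransGen.refl

lemma newNet_WPI {N : PetriNet P L} (tr : S → L → S → Prop) (m : L → L) (hW : N.WPI) :
    (newNet N tr m).WPI := by
  rintro t t' ⟨q, hq, hq'⟩
  by_cases hl : ∃ s, enab tr s t <;> by_cases hl' : ∃ s, enab tr s t'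
  · cases q with
    | none => simp [PetriNet.preset, newNet, hl] at hq
    | some p =>
      simp only [PetriNet.preset, newNet, hl, hl', if_true, Set.mem_setOf_eq] at hq hq'
      rcases hW (m t) (m t') ⟨p, hq, hq'⟩ with h1 | h1
      · left
        rintro (_ | p)
        · simp [newNet, hl, hl']
        · simpa [newNet, hl, hl'] using h1 p
      · right
        rintro (_ | p)
        · simp [newNet, hl, hl']
        · simpa [newNet, hl, hl'] using h1 p
  · cases q <;> simp [PetriNet.preset, newNet, hl, hl'] at hq hq'
  · cases q <;> simp [PetriNet.preset, newNet, hl, hl'] at hq hq'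
  · left
    rintro (_ | p) <;> simp [newNet, hl, hl']

lemma newNet_disj {N : PetriNet P L} (tr : S → L → S → Prop) (m : L → L) (a b : L)
    (ha : ¬ ∃ s, enab tr s a) (hb : ∃ s, enab tr s b) :
    ∀ q, ¬ (0 < (newNet N tr m).Wpt q a ∧ 0 < (newNet N tr m).Wpt q b) := by
  rintro (_ | p) <;> simp [newNet, ha, hb]

end Helpers


/-- For a finite, reachable, deterministic LTS without self-loops
that is solvable by a WPI Petri net, there is a WPI Petri net solving it in which
(i) equivalent labels have identical presets, (ii) labels related by `∥`, or by
`⋈` without `⊲⊳`, have disjoint presets, and (iii) `a ▷ b` with `a ⊲⊳ b` yields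
proper containment `W(·,b) ⪇ W(·,a)`. -/
theorem selfloop_free_preset_relations
    {S L : Type*} [Fintype S] [Fintype L] (tr : S → L → S → Prop) (s₀ : S)
    (hdet : Deterministic tr) (hreach : ReachableLTS tr s₀)
    (hnoself : ∀ (s : S) (t : L), ¬ tr s t s)
    (hsolvable : ∃ (P : Type) (_ : Finite P) (N : PetriNet P L),
        N.WPI ∧ Solves N tr s₀) :
    ∃ (P : Type) (_ : Finite P) (N : PetriNet P L), N.WPI ∧ Solves N tr s₀ ∧
      ∀ a b : L,
        (lequiv tr a b → ∀ p, N.Wpt p a = N.Wpt p b) ∧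
        ((linter tr a b ∨ (lbowtie tr a b ∧ ¬ ldeact tr a b)) →
          N.preset a ∩ N.preset b = ∅) ∧
        ((limpl tr a b ∧ ldeact tr a b) →
          (∀ p, N.Wpt p b ≤ N.Wpt p a) ∧ (∃ p, N.Wpt p b ≠ N.Wpt p a)) := by

  obtain ⟨P, hP, N, hW, ζ, hζ⟩ := hsolvable
  have h : IsSol N tr s₀ ζ := hζ
  have hmax : ∀ t, ∃ m, (∃ s, enab tr s t) → lequiv tr t m ∧
      ∀ u, lequiv tr t u → ∀ p, N.Wpt p u ≤ N.Wpt p m := by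
    intro t
    by_cases hl : ∃ s, enab tr s t
    · obtain ⟨m, hm⟩ := h.exists_max hnoself hW t hl
      exact ⟨m, fun _ => hm⟩
    · exact ⟨t, fun h => absurd h hl⟩
  choose m hm using hmax
  have hW' := newNet_WPI tr m hW
  have h' := newNet_sol h hreach m hm
  refine ⟨Option P, inferInstance, newNet N tr m, hW', ⟨_, h'⟩, fun a b => ⟨?_, ?_, ?_⟩⟩
  · intro hab
    by_cases hl : ∃ s, enab tr s a
    · have hl' : ∃ s, enab tr s b := by
        obtain ⟨s, hs⟩ := hl
        exact ⟨s, (hab s).1 hs⟩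
      obtain ⟨ha1, ha2⟩ := hm a hl
      obtain ⟨hb1, hb2⟩ := hm b hl'
      rintro (_ | p)
      · simp [newNet, hl, hl']
      · have h1 := ha2 (m b) (fun s => (hab s).trans (hb1 s)) p
        have h2 := hb2 (m a) (fun s => (hab s).symm.trans (ha1 s)) p
        simpa [newNet, hl, hl'] using le_antisymm h2 h1
    · have hl' : ¬ ∃ s, enab tr s b := by
        rintro ⟨s, hs⟩
        exact hl ⟨s, (hab s).2 hs⟩
      rintro (_ | p) <;> simp [newNet, hl, hl']
  · rintro (⟨⟨s, hs, hs'⟩, ⟨u, hu, hu'⟩⟩ | ⟨hbt, hnd⟩)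
    · by_contra hne
      rcases hW' a b (Set.nonempty_iff_ne_empty.2 hne) with h1 | h1
      · exact hu' (h'.mono h1 u hu)
      · exact hs' (h'.mono h1 s hs)
    · rw [Set.eq_empty_iff_forall_notMem]
      rintro q ⟨hqa, hqb⟩
      rcases hbt with ⟨h1, s, hs, _⟩ | ⟨h1, s, hs, _⟩
      · have hd : ¬ ∃ s, enab tr s a := fun hl => hnd (h.impl_deact hnoself a b hl h1)
        exact newNet_disj tr m a b hd ⟨s, hs⟩ q ⟨hqa, hqb⟩
      · have hd : ¬ ∃ s, enab tr s b := by
          intro hl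
          obtain ⟨x, y, hxy⟩ := h.impl_deact hnoself b a hl h1
          exact hnd ⟨x, y, hxy.symm⟩
        exact newNet_disj tr m b a hd ⟨s, hs⟩ q ⟨hqb, hqa⟩
  · rintro ⟨⟨_, s, hs, hs'⟩, hd⟩
    have hnot : ¬ ∀ p, (newNet N tr m).Wpt p a ≤ (newNet N tr m).Wpt p b :=
      fun h1 => hs' (h'.mono h1 s hs)
    refine ⟨(hW' a b (h'.inter hd)).resolve_left hnot, ?_⟩
    by_contra! hc
    exact hnot fun p => (hc p).ge
end

section
/- Let N=(P,T,W,M₀) be a block-reduced asymmetric choice (BRAC) Petri net and let a,b∈T be transitions with ∅≠•a and •a⊊•b (proper inclusion of presets). Then there exist distinct places p,q∈P with •a={p} and •b={p,q}. Consequently, in a BRAC net there are no transitions a,b,c with ∅≠•a⊊•b⊊•c, and whenever •a⊊•b and •c⊊•b with •a,•c nonempty, then •a=•c. -/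
theorem brac_key {P T : Type*} (N : PetriNet P T) (h : N.BRAC) (a b : T) (p q : P)
    (hpa : p ∈ N.preset a) (hpb : p ∈ N.preset b) (hqb : q ∈ N.preset b)
    (hqa : q ∉ N.preset a) :
    N.preset a = {p} ∧ N.preset b = {p, q} ∧ ∀ t, q ∈ N.preset t → p ∈ N.preset t := by
  have ha1 : a ∈ N.postset p := hpa
  have ha2 : a ∉ N.postset q := hqa
  have hb1 : b ∈ N.postset p := hpb
  have hb2 : b ∈ N.postset q := hqb
  rcases h.2 p q ⟨b, hb1, hb2⟩ with e | ⟨T1, T2, ⟨e1, e2, -, -⟩ | ⟨e1, e2, e3, e4⟩⟩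
  · exact absurd (e ▸ ha1) ha2
  · exact absurd (e2 ▸ Or.inl (e1 ▸ ha1)) ha2
  · have haT : a ∈ T2 := by
      rw [e2] at ha1
      rcases ha1 with h1 | h1
      · exact absurd (e1 ▸ h1) ha2
      · exact h1
    refine ⟨?_, ?_, ?_⟩
    · apply Set.Subset.antisymm
      · intro x hx
        rw [← e4]
        exact ⟨a, haT, hx⟩
      · rintro x rfl
        exact hpa
    · apply Set.Subset.antisymm
      · intro x hx
        rw [← e3]
        exact ⟨b, e1 ▸ hb2, hx⟩
      · rintro x (rfl | rfl)
        · exact hpb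
        · exact hqb
    · intro t ht
      have h1 : t ∈ N.postset q := ht
      have h2 : t ∈ N.postset p := by
        rw [e2, ← e1]
        exact Or.inl h1
      exact h2

/-- In a BRAC net, a proper inclusion `∅ ≠ •a ⊊ •b` forces
`•a = {p}` and `•b = {p,q}` for distinct places `p,q`; hence there are no chains
`∅ ≠ •a ⊊ •b ⊊ •c`, and two proper inclusions into the same `•b` coincide. -/
theorem brac_proper_inclusion_structure
    {P T : Type*} [Fintype P] [Fintype T]
    (N : PetriNet P T) (h : N.BRAC) :
    (∀ a b : T, N.preset a ≠ ∅ → N.preset a ⊂ N.preset b →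
      ∃ p q : P, p ≠ q ∧ N.preset a = {p} ∧ N.preset b = {p, q}) ∧
    (¬ ∃ a b c : T, N.preset a ≠ ∅ ∧ N.preset a ⊂ N.preset b ∧
        N.preset b ⊂ N.preset c) ∧
    (∀ a b c : T, N.preset a ≠ ∅ → N.preset c ≠ ∅ →
      N.preset a ⊂ N.preset b → N.preset c ⊂ N.preset b →
      N.preset a = N.preset c) := by
  have key1 : ∀ a b : T, N.preset a ≠ ∅ → N.preset a ⊂ N.preset b →
      ∃ p q : P, p ≠ q ∧ N.preset a = {p} ∧ N.preset b = {p, q} ∧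
        ∀ t, q ∈ N.preset t → p ∈ N.preset t := by
    intro a b hne hab
    obtain ⟨p, hp⟩ := Set.nonempty_iff_ne_empty.mpr hne
    obtain ⟨q, hq, hqa⟩ := Set.exists_of_ssubset hab
    refine ⟨p, q, ?_, brac_key N h a b p q hp (hab.1 hp) hq hqa⟩
    rintro rfl
    exact hqa hp
  refine ⟨?_, ?_, ?_⟩
  · intro a b hne hab
    obtain ⟨p, q, h1, h2, h3, -⟩ := key1 a b hne hab
    exact ⟨p, q, h1, h2, h3⟩
  · rintro ⟨a, b, c, hne, hab, hbc⟩
    obtain ⟨p, q, h1, h2, h3, -⟩ := key1 a b hne hab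
    have hp : p ∈ N.preset b := by rw [h3]; simp
    have hq : q ∈ N.preset b := by rw [h3]; simp
    obtain ⟨p', q', -, h2', -, -⟩ := key1 b c (Set.nonempty_iff_ne_empty.mp ⟨p, hp⟩) hbc
    rw [h2'] at hp hq
    exact h1 (hp.trans hq.symm)
  · intro a b c hna hnc hab hcb
    obtain ⟨p, q, h1, h2, h3, h4⟩ := key1 a b hna hab
    obtain ⟨r, s, g1, g2, -, -⟩ := key1 c b hnc hcb
    have hrc : r ∈ N.preset c := by rw [g2]; rfl
    have hr : r ∈ N.preset b := hcb.1 hrc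
    rw [h3] at hr
    rcases hr with hr | hr
    · rw [h2, g2, hr]
    · have hr' : r = q := hr
      have hp : p ∈ N.preset c := h4 c (hr' ▸ hrc)
      rw [g2] at hp
      have hp' : p = r := hp
      rw [h2, g2, hp']
end
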